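/- Let μ_N = (1/N) Σ_{n=0}^{N−1} Q^n(0, ·) be the Cesàro averages of the transition probabilities started from the point 0 of the circle. Then the sequence (μ_N) has at least one weak limit point, and every weak limit point μ is a Q-invariant probability measure which satisfies μ(A⁰) = 1, where A⁰ ⊂ 𝕋 is the countable set of points represented by triadic rationals, A⁰ = { j·3^{−n} mod 1 : n ∈ ℕ, 0 ≤ j < 3^n } (equivalently, points of [0,1) all but finitely many of whose ternary digits are 0). -/

import Mathlib

open MeasureTheory
open scoped ENNReal

/-- The representative in `[0,1)` of a point of the unit circle `𝕋 = ℝ/ℤ`. -/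
noncomputable def circleRep (z : UnitAddCircle) : ℝ :=
  ((AddCircle.equivIco 1 0 z : Set.Ico (0 : ℝ) (0 + 1)) : ℝ)

/-- The Markov kernel `Q(z,·) = (1−3p)·δ_{3z} + p·(δ_{z̄/3} + δ_{(z̄+1)/3} + δ_{(z̄+2)/3})`
on the circle, arithmetic taken modulo 1. -/
noncomputable def Qkern (p : ℝ) (z : UnitAddCircle) : Measure UnitAddCircle :=
  ENNReal.ofReal (1 - 3 * p) • Measure.dirac (((3 * circleRep z : ℝ) : UnitAddCircle))
    + ENNReal.ofReal p •
      (Measure.dirac (((circleRep z / 3 : ℝ) : UnitAddCircle))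
        + Measure.dirac ((((circleRep z + 1) / 3 : ℝ) : UnitAddCircle))
        + Measure.dirac ((((circleRep z + 2) / 3 : ℝ) : UnitAddCircle)))

/-- The `n`-step transition kernel `Q^n`. -/
noncomputable def Qiter (p : ℝ) : ℕ → UnitAddCircle → Measure UnitAddCircle
  | 0, z => Measure.dirac z
  | n + 1, z => (Qiter p n z).bind (Qkern p)

/-- The set `A⁰` of triadic-rational points of the circle. -/
def triadicPoints : Set UnitAddCircle :=
  {z : UnitAddCircle | ∃ n j : ℕ, j < 3 ^ n ∧ z = (((j : ℝ) / 3 ^ n : ℝ) : UnitAddCircle)}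

open Filter Topology
open scoped NNReal

lemma coe_circleRep (z : UnitAddCircle) : ((circleRep z : ℝ) : UnitAddCircle) = z :=
  AddCircle.coe_equivIco

lemma circleRep_coe (x : ℝ) : circleRep (x : UnitAddCircle) = Int.fract x := by
  simp [circleRep]

lemma circleRep_mem (z : UnitAddCircle) : circleRep z ∈ Set.Ico (0 : ℝ) 1 := by
  simpa only [circleRep, Set.mem_Ico, zero_add] using (AddCircle.equivIco (1 : ℝ) 0 z).2

lemma measurable_circleRep : Measurable circleRep :=
  measurable_subtype_coe.comp (AddCircle.measurableEquivIco 1 0).measurable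

lemma coe_three_mul_circleRep (z : UnitAddCircle) :
    ((3 * circleRep z : ℝ) : UnitAddCircle) = (3 : ℕ) • z := by
  conv_rhs => rw [← coe_circleRep z]
  rw [← AddCircle.coe_nsmul, nsmul_eq_mul]
  norm_num

/-- The points `(z̄ + k) / 3` are preimages of `z` under multiplication by three. -/
lemma three_nsmul_coe_div_three (z : UnitAddCircle) (k : ℕ) :
    (3 : ℕ) • (((circleRep z + k) / 3 : ℝ) : UnitAddCircle) = z := by
  rw [← AddCircle.coe_nsmul, nsmul_eq_mul]
  have h : ((3 : ℕ) : ℝ) * ((circleRep z + k) / 3) = circleRep z + k • (1 : ℝ) := by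
    simp only [nsmul_eq_mul]
    push_cast
    ring
  rw [h, AddCircle.coe_add, AddCircle.coe_nsmul, AddCircle.coe_period, coe_circleRep]
  simp

lemma lintegral_Qkern (p : ℝ) (z : UnitAddCircle) (f : UnitAddCircle → ℝ≥0∞) :
    ∫⁻ x, f x ∂Qkern p z = ENNReal.ofReal (1 - 3 * p) * f ((3 : ℕ) • z)
      + ENNReal.ofReal p * (f ((circleRep z / 3 : ℝ) : UnitAddCircle)
        + f (((circleRep z + 1) / 3 : ℝ) : UnitAddCircle)
        + f (((circleRep z + 2) / 3 : ℝ) : UnitAddCircle)) := by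
  simp only [Qkern, lintegral_add_measure, lintegral_smul_measure, lintegral_dirac, smul_eq_mul,
    coe_three_mul_circleRep]

lemma measurable_Qkern (p : ℝ) : Measurable (Qkern p) := by
  refine Measure.measurable_of_measurable_coe _ fun s hs => ?_
  have hd : ∀ g : ℝ → ℝ, Measurable g → Measurable fun z : UnitAddCircle =>
      Measure.dirac ((g (circleRep z) : ℝ) : UnitAddCircle) s := fun g hg =>
    (Measure.measurable_coe hs).comp (Measure.measurable_dirac.comp
      (AddCircle.measurable_mk'.comp (hg.comp measurable_circleRep)))
  simp only [Qkern, Measure.add_apply, Measure.smul_apply, smul_eq_mul]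
  have h₀ := hd (fun x => 3 * x) (by fun_prop)
  have h₁ := hd (fun x => x / 3) (by fun_prop)
  have h₂ := hd (fun x => (x + 1) / 3) (by fun_prop)
  have h₃ := hd (fun x => (x + 2) / 3) (by fun_prop)
  exact (h₀.const_mul _).add (((h₁.add h₂).add h₃).const_mul _)

lemma isProbabilityMeasure_Qkern {p : ℝ} (hp : 0 ≤ p) (hp3 : 3 * p ≤ 1) (z : UnitAddCircle) :
    IsProbabilityMeasure (Qkern p z) := by
  constructor
  rw [← setLIntegral_one, Measure.restrict_univ, lintegral_Qkern, mul_one,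
    show (1 : ℝ≥0∞) + 1 + 1 = ENNReal.ofReal 3 by norm_num, ← ENNReal.ofReal_mul hp,
    ← ENNReal.ofReal_add (by linarith) (by linarith)]
  rw [show 1 - 3 * p + p * 3 = 1 by ring, ENNReal.ofReal_one]

lemma isProbabilityMeasure_bind_Qkern {p : ℝ} (hp : 0 ≤ p) (hp3 : 3 * p ≤ 1)
    (μ : Measure UnitAddCircle) [IsProbabilityMeasure μ] :
    IsProbabilityMeasure (μ.bind (Qkern p)) := by
  have := isProbabilityMeasure_Qkern hp hp3
  constructor
  rw [Measure.bind_apply MeasurableSet.univ (measurable_Qkern p).aemeasurable]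
  simp

lemma isProbabilityMeasure_Qiter {p : ℝ} (hp : 0 ≤ p) (hp3 : 3 * p ≤ 1) (n : ℕ)
    (z : UnitAddCircle) : IsProbabilityMeasure (Qiter p n z) := by
  induction n with
  | zero => exact Measure.dirac.isProbabilityMeasure
  | succ n ih => exact isProbabilityMeasure_bind_Qkern hp hp3 _

/-- Summing a continuous function over the three preimages under multiplication by three
gives a continuous function. -/
lemma continuous_sum_preimages {f : UnitAddCircle → ℝ≥0} (hf : Continuous f) :
    Continuous fun z : UnitAddCircle => f ((circleRep z / 3 : ℝ) : UnitAddCircle)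
        + f (((circleRep z + 1) / 3 : ℝ) : UnitAddCircle)
        + f (((circleRep z + 2) / 3 : ℝ) : UnitAddCircle) := by
  let G : ℝ → ℝ≥0 := fun x => f ((x / 3 : ℝ) : UnitAddCircle)
        + f (((x + 1) / 3 : ℝ) : UnitAddCircle) + f (((x + 2) / 3 : ℝ) : UnitAddCircle)
  have hG : Continuous G := by
    have hmk : Continuous ((↑) : ℝ → UnitAddCircle) := AddCircle.continuous_mk' 1
    have := hf.comp hmk
    exact ((this.comp (by fun_prop : Continuous fun x : ℝ => x / 3)).add
      (this.comp (by fun_prop : Continuous fun x : ℝ => (x + 1) / 3))).add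
      (this.comp (by fun_prop : Continuous fun x : ℝ => (x + 2) / 3))
  have hper : Function.Periodic G 1 := by
    intro x
    have h : (((x + 1 + 2) / 3 : ℝ) : UnitAddCircle) = ((x / 3 : ℝ) : UnitAddCircle) := by
      rw [show (x + 1 + 2) / 3 = x / 3 + 1 by ring, AddCircle.coe_add, AddCircle.coe_period,
        add_zero]
    simp only [G, h, show x + 1 + 1 = x + 2 by ring]
    ring
  refine continuous_coinduced_dom.2 (hG.congr fun x => ?_)
  have h := hper.sub_int_mul_eq (x := x) ⌊x⌋
  rw [mul_one, Int.self_sub_floor] at h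
  rw [← h, ← circleRep_coe x]
  rfl

/-- The kernel `Qkern p` is Feller. -/
lemma exists_continuousMap_lintegral_Qkern (p : ℝ) (f : C(UnitAddCircle, ℝ≥0)) :
    ∃ g : C(UnitAddCircle, ℝ≥0), ∀ z, (g z : ℝ≥0∞) = ∫⁻ x, f x ∂Qkern p z := by
  refine ⟨⟨fun z => (1 - 3 * p).toNNReal * f ((3 : ℕ) • z) + p.toNNReal *
    (f ((circleRep z / 3 : ℝ) : UnitAddCircle)
        + f (((circleRep z + 1) / 3 : ℝ) : UnitAddCircle)
        + f (((circleRep z + 2) / 3 : ℝ) : UnitAddCircle)), ?_⟩, fun z => ?_⟩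
  · exact (continuous_const.mul (f.continuous.comp (continuous_nsmul 3))).add
      (continuous_const.mul (continuous_sum_preimages f.continuous))
  · rw [lintegral_Qkern]
    simp [ENNReal.ofReal]

/-- The points which are not annihilated by `3 ^ m`. -/
def tripleTail (m : ℕ) : Set UnitAddCircle := {z | (3 ^ m : ℕ) • z ≠ 0}

lemma isOpen_tripleTail (m : ℕ) : IsOpen (tripleTail m) :=
  isOpen_ne.preimage (continuous_nsmul (3 ^ m))

lemma compl_tripleTail_subset_triadicPoints (m : ℕ) : (tripleTail m)ᶜ ⊆ triadicPoints := by
  intro z hz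
  have hz : (3 ^ m : ℕ) • z = 0 := by simpa [tripleTail] using hz
  obtain ⟨h0, h1⟩ := circleRep_mem z
  rw [← coe_circleRep z, ← AddCircle.coe_nsmul, AddCircle.coe_eq_zero_iff] at hz
  obtain ⟨k, hk⟩ := hz
  simp only [zsmul_eq_mul, mul_one, nsmul_eq_mul, Nat.cast_pow, Nat.cast_ofNat] at hk
  have h3 : (0 : ℝ) < 3 ^ m := by positivity
  have hk0 : 0 ≤ k := by
    have : (0 : ℝ) ≤ k := hk ▸ by positivity
    exact_mod_cast this
  lift k to ℕ using hk0
  rw [Int.cast_natCast] at hk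
  refine ⟨m, k, ?_, ?_⟩
  · have : (k : ℝ) < 3 ^ m := by rw [hk]; nlinarith
    exact_mod_cast this
  · rw [hk, mul_div_cancel_left₀ _ h3.ne', coe_circleRep]

lemma measurableSet_triadicPoints : MeasurableSet triadicPoints := by
  have h : triadicPoints ⊆
      Set.range fun q : ℕ × ℕ => (((q.2 : ℝ) / 3 ^ q.1 : ℝ) : UnitAddCircle) := by
    rintro z ⟨n, j, -, rfl⟩
    exact ⟨(n, j), rfl⟩
  exact ((Set.countable_range _).mono h).measurableSet

lemma Qkern_tripleTail_zero_le {p : ℝ} (z : UnitAddCircle) :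
    Qkern p z (tripleTail 0) ≤ ENNReal.ofReal (1 - 3 * p) * (tripleTail 1).indicator 1 z
      + ENNReal.ofReal p * 3 := by
  have hle : ∀ x, (tripleTail 0).indicator (1 : UnitAddCircle → ℝ≥0∞) x ≤ 1 :=
    Set.indicator_le_self' (by simp)
  rw [← lintegral_indicator_one (isOpen_tripleTail 0).measurableSet, lintegral_Qkern]
  gcongr
  · exact le_of_eq (by simp [Set.indicator, tripleTail])
  · exact (add_le_add (add_le_add (hle _) (hle _)) (hle _)).trans (by norm_num)

lemma Qkern_tripleTail_succ {p : ℝ} (m : ℕ) (z : UnitAddCircle) :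
    Qkern p z (tripleTail (m + 1)) = ENNReal.ofReal (1 - 3 * p) * (tripleTail (m + 2)).indicator 1 z
      + ENNReal.ofReal p * (3 * (tripleTail m).indicator 1 z) := by
  have hpre : ∀ k : ℕ, (tripleTail (m + 1)).indicator (1 : UnitAddCircle → ℝ≥0∞)
      (((circleRep z + k) / 3 : ℝ) : UnitAddCircle) = (tripleTail m).indicator 1 z := by
    intro k
    simp only [Set.indicator, tripleTail, Set.mem_ofPred_eq, pow_succ, mul_nsmul',
      three_nsmul_coe_div_three, Pi.one_apply]
    congr
  have h₀ := hpre 0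
  have h₁ := hpre 1
  have h₂ := hpre 2
  push_cast at h₀ h₁ h₂
  rw [add_zero] at h₀
  rw [← lintegral_indicator_one (isOpen_tripleTail (m + 1)).measurableSet, lintegral_Qkern,
    h₀, h₁, h₂]
  congr 1
  · simp [Set.indicator, tripleTail, pow_succ, mul_nsmul']
  · ring

/-- Geometric tail bound, uniform in the number of steps. -/
lemma Qiter_zero_tripleTail_le {p : ℝ} (hp : 0 < p) (hp3 : 3 * p < 1) (n m : ℕ) :
    Qiter p n 0 (tripleTail m) ≤ ENNReal.ofReal ((3 * p / (1 - 3 * p)) ^ (m + 1)) := by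
  have hq : 0 < 1 - 3 * p := by linarith
  set r := 3 * p / (1 - 3 * p) with hr
  have hr0 : 0 ≤ r := by positivity
  have hrq : (1 - 3 * p) * r = 3 * p := by rw [hr]; field_simp
  have hind : ∀ (μ : Measure UnitAddCircle) (k : ℕ),
      ∫⁻ z, (tripleTail k).indicator 1 z ∂μ = μ (tripleTail k) := fun μ k =>
    lintegral_indicator_one (isOpen_tripleTail k).measurableSet
  have hmeas : ∀ k, Measurable ((tripleTail k).indicator (1 : UnitAddCircle → ℝ≥0∞)) := fun k =>
    measurable_one.indicator (isOpen_tripleTail k).measurableSet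
  induction n generalizing m with
  | zero => simp [Qiter, tripleTail]
  | succ n ih =>
    have := isProbabilityMeasure_Qiter hp.le hp3.le n 0
    rw [Qiter, Measure.bind_apply (isOpen_tripleTail m).measurableSet
      (measurable_Qkern p).aemeasurable]
    cases m with
    | zero =>
      calc _ ≤ ∫⁻ z, (ENNReal.ofReal (1 - 3 * p) * (tripleTail 1).indicator 1 z
              + ENNReal.ofReal p * 3) ∂Qiter p n 0 :=
            lintegral_mono Qkern_tripleTail_zero_le
        _ = ENNReal.ofReal (1 - 3 * p) * Qiter p n 0 (tripleTail 1) + ENNReal.ofReal p * 3 := by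
          rw [lintegral_add_right _ measurable_const, lintegral_const_mul _ (hmeas 1), hind]
          simp
        _ ≤ ENNReal.ofReal (1 - 3 * p) * ENNReal.ofReal (r ^ 2)
              + ENNReal.ofReal p * ENNReal.ofReal 3 := by
          gcongr
          · exact ih 1
          · norm_num
        _ = ENNReal.ofReal (r ^ (0 + 1)) := by
          rw [← ENNReal.ofReal_mul hq.le, ← ENNReal.ofReal_mul hp.le,
            ← ENNReal.ofReal_add (by positivity) (by positivity)]
          congr 1
          linear_combination (r - 1) * hrq
    | succ m =>
      simp only [Qkern_tripleTail_succ]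
      calc _ = ENNReal.ofReal (1 - 3 * p) * Qiter p n 0 (tripleTail (m + 2))
              + ENNReal.ofReal p * (3 * Qiter p n 0 (tripleTail m)) := by
            rw [lintegral_add_left ((hmeas _).const_mul _), lintegral_const_mul _ (hmeas _),
              lintegral_const_mul _ ((hmeas _).const_mul _), lintegral_const_mul _ (hmeas _),
              hind, hind]
        _ ≤ ENNReal.ofReal (1 - 3 * p) * ENNReal.ofReal (r ^ (m + 3))
              + ENNReal.ofReal p * (ENNReal.ofReal 3 * ENNReal.ofReal (r ^ (m + 1))) := by
          gcongr
          · exact ih (m + 2)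
          · norm_num
          · exact ih m
        _ = ENNReal.ofReal (r ^ (m + 1 + 1)) := by
          rw [← ENNReal.ofReal_mul hq.le, ← ENNReal.ofReal_mul (by norm_num),
            ← ENNReal.ofReal_mul hp.le, ← ENNReal.ofReal_add (by positivity) (by positivity)]
          congr 1
          linear_combination (r ^ (m + 2) - r ^ (m + 1)) * hrq

/-- The Cesàro sums of a sequence and of its shift differ by two boundary terms. -/
lemma cesaro_shift (a : ℕ → ℝ≥0∞) (N : ℕ) :
    ((N : ℝ≥0∞) + 1)⁻¹ * ∑ n ∈ Finset.range (N + 1), a (n + 1) + ((N : ℝ≥0∞) + 1)⁻¹ * a 0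
      = ((N : ℝ≥0∞) + 1)⁻¹ * ∑ n ∈ Finset.range (N + 1), a n
        + ((N : ℝ≥0∞) + 1)⁻¹ * a (N + 1) := by
  rw [← mul_add, ← mul_add, ← Finset.sum_range_succ', ← Finset.sum_range_succ]

lemma tendsto_inv_natCast_add_one_mul {a : ℕ → ℝ≥0∞} {C : ℝ≥0} (ha : ∀ n, a n ≤ C) :
    Tendsto (fun N : ℕ => ((N : ℝ≥0∞) + 1)⁻¹ * a N) atTop (𝓝 0) := by
  have h : Tendsto (fun N : ℕ => ((N : ℝ≥0∞) + 1)⁻¹ * C) atTop (𝓝 0) := by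
    have h1 := (ENNReal.tendsto_inv_nat_nhds_zero.comp (tendsto_add_atTop_nat 1))
    have h2 := ENNReal.Tendsto.mul_const (b := (C : ℝ≥0∞)) h1 (Or.inr ENNReal.coe_ne_top)
    simpa using h2
  exact tendsto_of_tendsto_of_tendsto_of_le_of_le tendsto_const_nhds h (fun _ => zero_le)
    fun N => by gcongr; exact ha N

/-- Example 5.3: the Cesàro (Khasminskii) averages `μ_N = N^{-1} Σ_{n<N} Q^n(0,·)` have at
least one weak limit point, and every weak limit point is a `Q`-invariant probability
measure giving full mass to the set `A⁰` of triadic points. -/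
theorem Qiter_cesaro_limit_invariant (p : ℝ) (hp : 0 < p) (hp6 : p < 1 / 6)
    (μN : ℕ → ProbabilityMeasure UnitAddCircle)
    (hμN : ∀ N : ℕ, (μN N : Measure UnitAddCircle)
      = (((N : ℝ≥0∞) + 1))⁻¹ •
          ∑ n ∈ Finset.range (N + 1), Qiter p n (((0 : ℝ) : UnitAddCircle))) :
    (∃ μ : ProbabilityMeasure UnitAddCircle, MapClusterPt μ Filter.atTop μN) ∧
    ∀ μ : ProbabilityMeasure UnitAddCircle, MapClusterPt μ Filter.atTop μN →
      (μ : Measure UnitAddCircle).bind (Qkern p) = (μ : Measure UnitAddCircle) ∧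
      (μ : Measure UnitAddCircle) triadicPoints = 1 := by
  have hp3 : 3 * p < 1 := by linarith
  have hprob := fun n => isProbabilityMeasure_Qiter hp.le hp3.le n ((0 : ℝ) : UnitAddCircle)
  refine ⟨exists_clusterPt_of_compactSpace _, fun μ hμ => ?_⟩
  obtain ⟨U, hU, hlim⟩ := mapClusterPt_iff_ultrafilter.1 hμ
  constructor
  · have := isProbabilityMeasure_bind_Qkern hp.le hp3.le (μ : Measure UnitAddCircle)
    refine ext_of_forall_lintegral_eq_of_IsFiniteMeasure fun f => ?_
    obtain ⟨g, hg⟩ := exists_continuousMap_lintegral_Qkern p f.toContinuousMap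
    have hfm : Measurable fun x => (f x : ℝ≥0∞) := f.continuous.measurable.coe_nnreal_ennreal
    have hbind : ∀ ν : Measure UnitAddCircle,
        ∫⁻ x, f x ∂ν.bind (Qkern p) = ∫⁻ z, g z ∂ν := fun ν => by
      rw [Measure.lintegral_bind (measurable_Qkern p).aemeasurable hfm.aemeasurable]
      exact lintegral_congr fun z => (hg z).symm
    rw [hbind]
    set a : ℕ → ℝ≥0∞ := fun n => ∫⁻ x, f x ∂Qiter p n ((0 : ℝ) : UnitAddCircle)
    have haC : ∀ n, a n ≤ (nndist f 0 : ℝ≥0) := fun n => by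
      calc a n ≤ ∫⁻ _, (nndist f 0 : ℝ≥0) ∂Qiter p n ((0 : ℝ) : UnitAddCircle) :=
            lintegral_mono fun x =>
              ENNReal.coe_le_coe.2 (BoundedContinuousFunction.NNReal.upper_bound f x)
        _ = _ := by simp
    have hf' : ∀ N, ∫⁻ x, f x ∂(μN N : Measure UnitAddCircle)
        = ((N : ℝ≥0∞) + 1)⁻¹ * ∑ n ∈ Finset.range (N + 1), a n := fun N => by
      rw [hμN, lintegral_smul_measure, lintegral_finsetSum_measure, smul_eq_mul]
    have hg' : ∀ N, ∫⁻ x, g x ∂(μN N : Measure UnitAddCircle)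
        = ((N : ℝ≥0∞) + 1)⁻¹ * ∑ n ∈ Finset.range (N + 1), a (n + 1) := fun N => by
      rw [hμN, lintegral_smul_measure, lintegral_finsetSum_measure, smul_eq_mul]
      simp only [a, Qiter, hbind]
    have hcf := ((ProbabilityMeasure.continuous_lintegral_continuousMap
      f.toContinuousMap).tendsto μ).comp hlim
    have hcg := ((ProbabilityMeasure.continuous_lintegral_continuousMap g).tendsto μ).comp hlim
    have hl := hcg.add ((tendsto_inv_natCast_add_one_mul fun _ => haC 0).mono_left hU)
    have hr := hcf.add ((tendsto_inv_natCast_add_one_mul fun n => haC (n + 1)).mono_left hU)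
    rw [add_zero] at hl hr
    refine tendsto_nhds_unique (hl.congr fun N => ?_) hr
    have := cesaro_shift a N
    rw [← hf', ← hg'] at this
    exact this
  · rw [prob_compl_eq_zero_iff measurableSet_triadicPoints |>.symm]
    set r := 3 * p / (1 - 3 * p)
    have hr0 : 0 ≤ r := div_nonneg (by linarith) (by linarith)
    have hr1 : r < 1 := (div_lt_one (by linarith)).2 (by linarith)
    have hbound : ∀ m : ℕ, (μ : Measure UnitAddCircle) triadicPointsᶜ
        ≤ ENNReal.ofReal (r ^ (m + 1)) := fun m => by
      refine (measure_mono (Set.compl_subset_comm.1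
        (compl_tripleTail_subset_triadicPoints m))).trans ?_
      refine (ProbabilityMeasure.le_liminf_measure_open_of_tendsto hlim
        (isOpen_tripleTail m)).trans ?_
      refine liminf_le_of_le (by isBoundedDefault) fun b hb => ?_
      obtain ⟨N, hN⟩ := hb.exists
      refine hN.trans ?_
      rw [hμN, Measure.smul_apply, Measure.finsetSum_apply, smul_eq_mul]
      calc _ ≤ ((N : ℝ≥0∞) + 1)⁻¹ * ∑ _n ∈ Finset.range (N + 1),
            ENNReal.ofReal (r ^ (m + 1)) := by
            gcongr with n
            exact Qiter_zero_tripleTail_le hp hp3 n m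
        _ = ENNReal.ofReal (r ^ (m + 1)) := by
          rw [Finset.sum_const, Finset.card_range, nsmul_eq_mul, ← mul_assoc]
          push_cast
          rw [ENNReal.inv_mul_cancel (by simp) (by simp), one_mul]
    have hlim0 : Tendsto (fun m : ℕ => ENNReal.ofReal (r ^ (m + 1))) atTop (𝓝 0) := by
      have h := (tendsto_pow_atTop_nhds_zero_of_lt_one hr0 hr1).comp (tendsto_add_atTop_nat 1)
      simpa using ENNReal.tendsto_ofReal h
    exact le_antisymm (ge_of_tendsto' hlim0 hbound) zero_le
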